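/- Let F be a nonzero homogeneous polynomial of degree 3 in k[x₀,x₁,x₂,x₃] such that the cubic surface V(F) is smooth. Suppose A ∈ GL₄(k) leaves V(F) invariant, A is not a scalar matrix, and A³ is a scalar matrix (so the image of A in PGL₄(k) has order 3). Then there is no 2-dimensional k-linear subspace W ⊆ k⁴ such that F vanishes identically on W and A acts on W as multiplication by a scalar. (No automorphism of order 3 of a smooth cubic surface fixes an exceptional line pointwise.) -/

import Mathlib

open MvPolynomial Matrix

/-- The polynomial `F(A·x)`, obtained from `F` by substituting
`xᵢ ↦ ∑ⱼ Aᵢⱼ xⱼ`. -/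
noncomputable def substMatrix {k : Type*} [Field k] (A : Matrix (Fin 4) (Fin 4) k)
    (F : MvPolynomial (Fin 4) k) : MvPolynomial (Fin 4) k :=
  aeval (fun i => ∑ j, C (A i j) * X j) F

/-- A matrix `A` leaves the cubic surface `V(F)` invariant if `F(A·x) = λ·F(x)`
for some `λ ∈ kˣ`. -/
def LeavesInvariant {k : Type*} [Field k] (A : Matrix (Fin 4) (Fin 4) k)
    (F : MvPolynomial (Fin 4) k) : Prop :=
  ∃ lam : kˣ, substMatrix A F = (lam : k) • F

/-- `F` vanishes identically on the linear subspace `W ⊆ k⁴`. -/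
def VanishesOn {k : Type*} [Field k] (F : MvPolynomial (Fin 4) k)
    (W : Submodule k (Fin 4 → k)) : Prop :=
  ∀ x ∈ W, eval x F = 0

/-- `W` is (the cone over) a projective line contained in the surface `V(F)`. -/
def IsLineIn {k : Type*} [Field k] (F : MvPolynomial (Fin 4) k)
    (W : Submodule k (Fin 4 → k)) : Prop :=
  Module.finrank k W = 2 ∧ VanishesOn F W

/-- `L`, a 1-dimensional subspace of `k⁴` regarded as a point of `ℙ³(k)`, is an
Eckardt point of `V(F)`: at least three distinct projective lines contained in
`V(F)` pass through it. -/
def IsEckardtPoint {k : Type*} [Field k] (F : MvPolynomial (Fin 4) k)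
    (L : Submodule k (Fin 4 → k)) : Prop :=
  Module.finrank k L = 1 ∧
    ∃ W₁ W₂ W₃ : Submodule k (Fin 4 → k),
      W₁ ≠ W₂ ∧ W₁ ≠ W₃ ∧ W₂ ≠ W₃ ∧
      IsLineIn F W₁ ∧ IsLineIn F W₂ ∧ IsLineIn F W₃ ∧
      L ≤ W₁ ∧ L ≤ W₂ ∧ L ≤ W₃


section Aux

variable {k V : Type*} [Field k] [AddCommGroup V] [Module k V]

/-- Differential of the cubic form `x ↦ M x x x`. -/
noncomputable def cubD (M : V →ₗ[k] V →ₗ[k] V →ₗ[k] k) (x : V) : V →ₗ[k] k :=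
  (M.flip x).flip x + (M x).flip x + M x x

lemma cubD_apply (M : V →ₗ[k] V →ₗ[k] V →ₗ[k] k) (x v : V) :
    cubD M x v = M v x x + M x v x + M x x v := by
  simp [cubD]

/-- Full polarization of the cubic form. -/
def cubT (M : V →ₗ[k] V →ₗ[k] V →ₗ[k] k) (x y z : V) : k :=
  M x y z + M x z y + M y x z + M y z x + M z x y + M z y x

lemma coeff_one_zero [Infinite k] {a b c d : k}
    (h : ∀ t : k, a + t * b + t ^ 2 * c + t ^ 3 * d = 0) : b = 0 := by
  have : (Polynomial.C a + Polynomial.X * Polynomial.C b + Polynomial.X ^ 2 * Polynomial.C c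
      + Polynomial.X ^ 3 * Polynomial.C d : Polynomial k) = 0 := by
    apply Polynomial.funext
    intro t
    simp
    linear_combination h t
  have h1 := congrArg (fun p => Polynomial.coeff p 1) this
  simpa [Polynomial.coeff_X_pow, Polynomial.coeff_C, Polynomial.coeff_X_mul,
    Polynomial.coeff_mul_C] using h1

lemma cub_expand (M : V →ₗ[k] V →ₗ[k] V →ₗ[k] k) (x v : V) (t : k) :
    M (x + t • v) (x + t • v) (x + t • v) =
      M x x x + t * cubD M x v + t ^ 2 * cubD M v x + t ^ 3 * M v v v := by
  simp [cubD_apply]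
  ring

lemma cubD_zero [Infinite k] (M : V →ₗ[k] V →ₗ[k] V →ₗ[k] k) (W : Submodule k V)
    (hW : ∀ x ∈ W, M x x x = 0) (x v : V) (hx : x ∈ W) (hv : v ∈ W) : cubD M x v = 0 := by
  apply coeff_one_zero (a := M x x x) (c := cubD M v x) (d := M v v v)
  intro t
  rw [← cub_expand]
  exact hW _ (W.add_mem hx (W.smul_mem t hv))

lemma cubD_inv [Infinite k] (M : V →ₗ[k] V →ₗ[k] V →ₗ[k] k) (A : V →ₗ[k] V) (l : k)
    (hA : ∀ x, M (A x) (A x) (A x) = l * M x x x) (x v : V) :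
    cubD M (A x) (A v) = l * cubD M x v := by
  rw [← sub_eq_zero]
  apply coeff_one_zero (a := M (A x) (A x) (A x) - l * M x x x)
    (c := cubD M (A v) (A x) - l * cubD M v x) (d := M (A v) (A v) (A v) - l * M v v v)
  intro t
  have h := hA (x + t • v)
  rw [map_add, map_smul, cub_expand, cub_expand] at h
  linear_combination h

lemma cubT_eq (M : V →ₗ[k] V →ₗ[k] V →ₗ[k] k) (x y z : V) :
    cubT M x y z = cubD M (x + y) z - cubD M x z - cubD M y z := by
  simp [cubD_apply, cubT]
  ring

lemma quad_zero [IsAlgClosed k] (a b c : k) :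
    ∃ s t : k, (s ≠ 0 ∨ t ≠ 0) ∧ s ^ 2 * a + s * t * b + t ^ 2 * c = 0 := by
  by_cases ha : a = 0
  · exact ⟨1, 0, by simp, by simp [ha]⟩
  · obtain ⟨s, hs⟩ := IsAlgClosed.exists_root
      (Polynomial.C a * Polynomial.X ^ 2 + Polynomial.C b * Polynomial.X + Polynomial.C c)
      (by rw [Polynomial.degree_quadratic ha]; decide)
    refine ⟨s, 1, by simp, ?_⟩
    simp [Polynomial.IsRoot] at hs
    linear_combination hs

lemma cubD_sep [IsAlgClosed k] [FiniteDimensional k V] (hV : Module.finrank k V = 4)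
    (M : V →ₗ[k] V →ₗ[k] V →ₗ[k] k)
    (hs : ∀ x, M x x x = 0 → (∀ v, cubD M x v = 0) → x = 0)
    (W : Submodule k V) (hd : Module.finrank k W = 2) (hW : ∀ x ∈ W, M x x x = 0)
    (u : V) (hu : ∀ x ∈ W, cubD M x u = 0) : u ∈ W := by
  have : Infinite k := IsAlgClosed.instInfinite
  by_contra hn
  have h3 : 3 ≤ Module.finrank k (W ⊔ Submodule.span k {u} : Submodule k V) := by
    have : W < W ⊔ Submodule.span k {u} := by
      refine lt_of_le_of_ne le_sup_left fun h => hn ?_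
      rw [h]
      exact Submodule.mem_sup_right (Submodule.mem_span_singleton_self u)
    have := Submodule.finrank_lt_finrank_of_lt this
    omega
  obtain ⟨v, hv⟩ : ∃ v, W ⊔ Submodule.span k {u} ⊔ Submodule.span k {v} = ⊤ := by
    by_cases ht : W ⊔ Submodule.span k {u} = ⊤
    · exact ⟨0, by simp [ht]⟩
    · obtain ⟨v, -, hv⟩ := SetLike.exists_of_lt (lt_top_iff_ne_top.2 ht)
      refine ⟨v, ?_⟩
      have : W ⊔ Submodule.span k {u} < W ⊔ Submodule.span k {u} ⊔ Submodule.span k {v} := by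
        refine lt_of_le_of_ne le_sup_left fun h => hv ?_
        rw [h]
        exact Submodule.mem_sup_right (Submodule.mem_span_singleton_self v)
      have h4 := Submodule.finrank_lt_finrank_of_lt this
      have h5 := Submodule.finrank_le (W ⊔ Submodule.span k {u} ⊔ Submodule.span k {v})
      apply Submodule.eq_top_of_finrank_eq
      omega
  let b := Module.finBasisOfFinrankEq k W hd
  obtain ⟨s, t, hst, h0⟩ := quad_zero (cubD M (b 0 : V) v) (cubT M (b 0 : V) (b 1 : V) v)
    (cubD M (b 1 : V) v)
  have hx : ((s • b 0 + t • b 1 : W) : V) = 0 := by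
    apply hs _ (hW _ (Subtype.property _))
    intro z
    have hz : z ∈ W ⊔ Submodule.span k {u} ⊔ Submodule.span k {v} := by rw [hv]; trivial
    suffices h : W ⊔ Submodule.span k {u} ⊔ Submodule.span k {v} ≤
        LinearMap.ker (cubD M ((s • b 0 + t • b 1 : W) : V)) from h hz
    refine sup_le (sup_le ?_ ?_) ?_
    · intro w hw
      exact cubD_zero M W hW _ _ (Subtype.property _) hw
    · rw [Submodule.span_singleton_le_iff_mem]
      exact hu _ (Subtype.property _)
    · rw [Submodule.span_singleton_le_iff_mem, LinearMap.mem_ker, ← h0]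
      simp [cubD_apply, cubT]
      ring
  have hx' : s • b 0 + t • b 1 = 0 := by exact_mod_cast hx
  have hli := b.linearIndependent
  rw [Fintype.linearIndependent_iff] at hli
  have := hli ![s, t] (by simpa using hx')
  have h0 := this 0
  have h1 := this 1
  simp at h0 h1
  rcases hst with h | h
  · exact h h0
  · exact h h1

lemma core [IsAlgClosed k] [FiniteDimensional k V] (hV : Module.finrank k V = 4)
    (M : V →ₗ[k] V →ₗ[k] V →ₗ[k] k)
    (hs : ∀ x, M x x x = 0 → (∀ v, cubD M x v = 0) → x = 0)
    (W : Submodule k V) (hd : Module.finrank k W = 2) (hW : ∀ x ∈ W, M x x x = 0)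
    (A : V →ₗ[k] V) (l : k) (hl : l ≠ 0)
    (hA : ∀ x, M (A x) (A x) (A x) = l * M x x x)
    (hAW : ∀ x ∈ W, A x = x) (hA3 : ∀ x, A (A (A x)) = x) : ∀ x, A x = x := by
  have : Infinite k := IsAlgClosed.instInfinite
  have hD := cubD_inv M A l hA
  have hN : ∀ v, A v - l • v ∈ W := by
    intro v
    apply cubD_sep hV M hs W hd hW
    intro x hx
    have := hD x v
    rw [hAW x hx] at this
    simp [this]
  have hAA : ∀ v, A (A v) = A v + l • A v - l • v := by
    intro v
    have := hAW _ (hN v)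
    rw [map_sub, map_smul] at this
    rw [sub_eq_iff_eq_add] at this
    rw [this]; abel
  obtain ⟨v0, hv0⟩ : ∃ v, v ∉ W := by
    by_contra! h
    have : W = ⊤ := by ext x; simp [h x]
    rw [this, finrank_top] at hd
    omega
  by_cases h1 : l = 1
  · subst h1
    by_contra! hne
    obtain ⟨u, hu⟩ := hne
    simp only [one_smul] at hN hAA
    have h3 : (3 : k) • (A u - u) = 0 := by
      have := hA3 u
      rw [hAA (A u), hAA u] at this
      have e : (3 : k) • (A u - u) = (A u + A u - u + (A u + A u - u) - A u) - u := by module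
      rw [e, this, sub_self]
    have hu' : A u - u ≠ 0 := sub_ne_zero.2 hu
    have h30 : (3 : k) = 0 := (smul_eq_zero.1 h3).resolve_right hu'
    have hT : ∀ x y z, cubT M (A x) (A y) (A z) = cubT M x y z := by
      intro x y z
      have a := hD (x + y) z
      have b := hD x z
      have c := hD y z
      rw [map_add] at a
      rw [cubT_eq, cubT_eq, a, b, c]; ring
    have hTW : ∀ x ∈ W, ∀ y ∈ W, ∀ z ∈ W, cubT M x y z = 0 := by
      intro x hx y hy z hz
      rw [cubT_eq, cubD_zero M W hW _ _ (W.add_mem hx hy) hz, cubD_zero M W hW _ _ hx hz,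
        cubD_zero M W hW _ _ hy hz]; ring
    have key : ∀ w ∈ W, ∀ y z, cubT M w (A y - y) z + cubT M w (A z - z) y = 0 := by
      intro w hw y z
      have e1 := hT w y z
      rw [hAW w hw] at e1
      have e2 := hTW w hw _ (hN y) _ (hN z)
      simp [cubT] at e1 e2 ⊢
      linear_combination e1 - e2
    apply hu'
    apply hs _ (hW _ (hN u))
    intro z
    have e1 := key _ (hN u) u z
    have e2 := key _ (hN z) u u
    have e3 : cubT M (A u - u) (A u - u) z = 2 * cubD M (A u - u) z := by
      simp only [cubT, cubD_apply]; ring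
    have e4 : cubT M (A z - z) (A u - u) u = cubT M (A u - u) (A z - z) u := by
      simp only [cubT]; ring
    rw [e3] at e1
    rw [e4] at e2
    have : (4 : k) * cubD M (A u - u) z = 0 := by linear_combination 2 * e1 - e2
    linear_combination this - cubD M (A u - u) z * h30
  · exfalso
    have hl1 : l - 1 ≠ 0 := sub_ne_zero.2 h1
    have hl3 : l ^ 3 = 1 := by
      by_contra hc
      apply hv0
      have hc' : 1 - l ^ 3 ≠ 0 := sub_ne_zero.2 (Ne.symm hc)
      have e : (1 - l ^ 3) • v0 = (1 + l + l ^ 2) • (A v0 - l • v0) := by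
        have := hA3 v0
        rw [hAA (A v0), hAA v0] at this
        have e : (1 - l ^ 3) • v0 - (1 + l + l ^ 2) • (A v0 - l • v0) =
          v0 - (A v0 + l • A v0 - l • v0 + l • (A v0 + l • A v0 - l • v0) - l • A v0) := by
          module
        rw [← sub_eq_zero, e, this, sub_self]
      rw [← W.smul_mem_iff hc', e]
      exact W.smul_mem _ (hN v0)
    have hE : ∀ v, A (A v - v) = l • (A v - v) := by
      intro v
      rw [map_sub, hAA]; module
    set u := A v0 - v0 with hu
    have hun : u ≠ 0 := by
      intro h
      apply hv0
      rw [← W.smul_mem_iff hl1]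
      have : (l - 1) • v0 = u - (A v0 - l • v0) := by rw [hu]; module
      rw [this, h, zero_sub]
      exact W.neg_mem (hN v0)
    have hEu : A u = l • u := hE v0
    clear_value u
    apply hun
    apply hs
    · have := hA u
      rw [hEu] at this
      simp only [map_smul, LinearMap.smul_apply, smul_eq_mul] at this
      have h2 : (1 - l) * M u u u = 0 := by linear_combination this - M u u u * hl3
      exact (mul_eq_zero.1 h2).resolve_left (sub_ne_zero.2 (Ne.symm h1))
    · intro z
      have ew : ∀ w ∈ W, cubD M u w = 0 := by
        intro w hw
        have := hD u w
        rw [hEu, hAW w hw] at this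
        simp only [cubD_apply, map_smul, LinearMap.smul_apply, smul_eq_mul] at this
        have h2 : (l * (l - 1)) * cubD M u w = 0 := by
          rw [cubD_apply]; linear_combination this
        exact (mul_eq_zero.1 h2).resolve_left (mul_ne_zero hl hl1)
      have eu : cubD M u (A z - z) = 0 := by
        have := hD u (A z - z)
        rw [hEu, hE z] at this
        generalize A z - z = y at *
        simp only [cubD_apply, map_smul, LinearMap.smul_apply, smul_eq_mul] at this
        have h2 : (1 - l) * cubD M u y = 0 := by
          rw [cubD_apply]
          linear_combination this - (M y u u + M u y u + M u u y) * hl3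
        exact (mul_eq_zero.1 h2).resolve_left (sub_ne_zero.2 (Ne.symm h1))
      have e2 := ew _ (hN z)
      have : (l - 1) * cubD M u z = 0 := by
        have e : (l - 1) • z = (A z - z) - (A z - l • z) := by module
        rw [← smul_eq_mul, ← map_smul, e, map_sub, eu, e2, sub_zero]
      exact (mul_eq_zero.1 this).resolve_left hl1

end Aux

/-- The trilinear map `(x, y, z) ↦ xᵢ yⱼ zₗ`. -/
noncomputable def monoTri {k : Type*} [Field k] (i j l : Fin 4) :
    (Fin 4 → k) →ₗ[k] (Fin 4 → k) →ₗ[k] (Fin 4 → k) →ₗ[k] k :=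
  LinearMap.mk₂ k (fun x y => (x i * y j) • (LinearMap.proj l : (Fin 4 → k) →ₗ[k] k))
    (by intros; simp [add_mul, add_smul]) (by intros; simp [mul_assoc, mul_smul])
    (by intros; simp [mul_add, add_smul])
    (by intros; rw [← mul_smul]; simp [mul_left_comm])

lemma monoTri_apply {k : Type*} [Field k] (i j l : Fin 4) (x y z : Fin 4 → k) :
    monoTri i j l x y z = x i * y j * z l := by
  simp [monoTri]

lemma exists_tri {k : Type*} [Field k] (F : MvPolynomial (Fin 4) k) (hhom : F.IsHomogeneous 3) :
    ∃ M : (Fin 4 → k) →ₗ[k] (Fin 4 → k) →ₗ[k] (Fin 4 → k) →ₗ[k] k,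
      (∀ x, eval x F = M x x x) ∧
      ∀ x v, ∑ i, v i * eval x (pderiv i F) = cubD M x v := by
  rw [F.as_sum]
  have hmem : ∀ s ∈ F.support, s.degree = 3 := by
    intro s hs
    have := hhom (mem_support_iff.1 hs)
    rw [Finsupp.degree_eq_weight_one]
    exact this
  generalize F.support = S at hmem ⊢
  induction S using Finset.induction_on with
  | empty => exact ⟨0, by simp, by simp [cubD_apply]⟩
  | insert s S hs ih =>
    obtain ⟨M, h1, h2⟩ := ih (fun t ht => hmem t (Finset.mem_insert_of_mem ht))
    obtain ⟨i, j, l, hijl⟩ : ∃ i j l, s = Finsupp.single i 1 + Finsupp.single j 1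
        + Finsupp.single l 1 := by
      have hc : (Finsupp.toMultiset s).card = 3 := by
        rw [Finsupp.card_toMultiset]
        exact hmem s (Finset.mem_insert_self _ _)
      obtain ⟨i, j, l, h⟩ := Multiset.card_eq_three.1 hc
      refine ⟨i, j, l, ?_⟩
      have h' := congrArg Multiset.toFinsupp h
      rw [Finsupp.toMultiset_toFinsupp] at h'
      rw [h', Multiset.insert_eq_cons, Multiset.insert_eq_cons, ← Multiset.singleton_add,
        ← Multiset.singleton_add, map_add, map_add, Multiset.toFinsupp_singleton,
        Multiset.toFinsupp_singleton, Multiset.toFinsupp_singleton, add_assoc]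
    have hm : monomial s (coeff s F) = C (coeff s F) * (X i * X j * X l) := by
      rw [hijl, X, X, X, monomial_mul, monomial_mul, C_mul_monomial]
      simp
    refine ⟨coeff s F • monoTri i j l + M, ?_, ?_⟩
    · intro x
      rw [Finset.sum_insert hs, map_add, h1, hm]
      simp [monoTri_apply]
    · intro x v
      have : ∀ a, pderiv a (∑ t ∈ insert s S, monomial t (coeff t F)) =
          pderiv a (C (coeff s F) * (X i * X j * X l)) +
            pderiv a (∑ t ∈ S, monomial t (coeff t F)) := by
        intro a
        rw [Finset.sum_insert hs, map_add, hm]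
      simp_rw [this, map_add, mul_add]
      rw [Finset.sum_add_distrib, h2, cubD_apply, cubD_apply]
      have hp : ∀ a b : Fin 4, eval x (pderiv a (X b : MvPolynomial (Fin 4) k)) =
          if b = a then 1 else 0 := by
        intro a b
        rw [pderiv_X]
        by_cases h : a = b
        · subst h; simp
        · simp [Pi.single_apply, h, Ne.symm h, eq_comm]
      simp only [Derivation.leibniz, pderiv_C, smul_eq_mul, map_add, map_mul, hp, eval_X, eval_C,
        mul_zero, add_zero, map_zero, mul_add, Finset.sum_add_distrib, mul_ite, mul_one,
        Finset.sum_ite_eq, Finset.mem_univ, if_true, LinearMap.add_apply, LinearMap.smul_apply,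
        monoTri_apply]
      ring

lemma eval_substMatrix {k : Type*} [Field k] (A : Matrix (Fin 4) (Fin 4) k)
    (F : MvPolynomial (Fin 4) k) (x : Fin 4 → k) :
    eval x (substMatrix A F) = eval (A.mulVec x) F := by
  unfold substMatrix
  induction F using MvPolynomial.induction_on with
  | C a => simp
  | add p q hp hq => rw [map_add, map_add, map_add, hp, hq]
  | mul_X p i hp =>
    rw [map_mul, map_mul, map_mul, hp]
    simp [Matrix.mulVec, dotProduct]

/-- No projective automorphism of order `3` of a smooth cubic
surface fixes an exceptional line pointwise: if `A ∈ GL₄(k)` leaves `V(F)`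
invariant, `A` is not scalar but `A³` is scalar, then there is no
2-dimensional subspace `W ⊆ k⁴` on which `F` vanishes identically and on
which `A` acts as multiplication by a scalar. -/
theorem stmt5 {k : Type*} [Field k] [IsAlgClosed k]
    (F : MvPolynomial (Fin 4) k) (hF0 : F ≠ 0) (hhom : F.IsHomogeneous 3)
    (hsmooth : ∀ x : Fin 4 → k,
      eval x F = 0 → (∀ i, eval x (pderiv i F) = 0) → x = 0)
    (A : Matrix (Fin 4) (Fin 4) k) (hA : IsUnit A.det)
    (hinv : LeavesInvariant A F)
    (hns : ¬ ∃ c : k, A = c • (1 : Matrix (Fin 4) (Fin 4) k))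
    (h3 : ∃ c : k, A ^ 3 = c • (1 : Matrix (Fin 4) (Fin 4) k)) :
    ¬ ∃ W : Submodule k (Fin 4 → k),
        Module.finrank k W = 2 ∧ VanishesOn F W ∧
        ∃ c : k, ∀ x ∈ W, A.mulVec x = c • x := by
  rintro ⟨W, hd, hW, c, hc⟩
  obtain ⟨M, hM1, hM2⟩ := exists_tri F hhom
  obtain ⟨lam, hlam⟩ := hinv
  obtain ⟨d, hd3⟩ := h3
  have hinvt : ∀ x, eval (A.mulVec x) F = lam * eval x F := by
    intro x
    have := congrArg (eval x) hlam
    rw [smul_eval] at this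
    rw [← this, eval_substMatrix]
  obtain ⟨w, hwW, hw0⟩ : ∃ w ∈ W, w ≠ 0 := by
    by_contra! h
    have : W = ⊥ := (Submodule.eq_bot_iff W).2 h
    rw [this, finrank_bot] at hd
    omega
  have hinj : ∀ x, A.mulVec x = 0 → x = 0 := by
    intro x hx
    have h := congrArg (A⁻¹).mulVec hx
    rwa [Matrix.mulVec_mulVec, Matrix.nonsing_inv_mul A hA, Matrix.one_mulVec,
      Matrix.mulVec_zero] at h
  have hc0 : c ≠ 0 := by
    rintro rfl
    exact hw0 (hinj w (by rw [hc w hwW, zero_smul]))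
  have hA3 : ∀ x, A.mulVec (A.mulVec (A.mulVec x)) = d • x := by
    intro x
    rw [Matrix.mulVec_mulVec, Matrix.mulVec_mulVec, ← pow_three', hd3,
      Matrix.smul_mulVec, Matrix.one_mulVec]
  have hdc : d = c ^ 3 := by
    have h := hA3 w
    rw [hc w hwW, Matrix.mulVec_smul, Matrix.mulVec_smul, hc w hwW, Matrix.mulVec_smul,
      hc w hwW, smul_smul, smul_smul] at h
    have := smul_left_injective k hw0 h
    rw [← this]; ring
  have hB : ∀ x, (c⁻¹ • Matrix.mulVecLin A) x = c⁻¹ • A.mulVec x := by intro x; simp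
  have hcore := core (k := k) (by simp) M
    (fun x hx hv => hsmooth x (by rw [hM1, hx]) (fun i => by
      have h := hM2 x (Pi.single i 1)
      rw [hv] at h
      simpa [Pi.single_apply] using h)) W hd
    (fun x hx => by rw [← hM1]; exact hW x hx)
    (c⁻¹ • Matrix.mulVecLin A) (c⁻¹ ^ 3 * lam)
    (mul_ne_zero (pow_ne_zero _ (inv_ne_zero hc0)) lam.ne_zero)
    (fun x => by
      rw [hB]
      simp only [map_smul, LinearMap.smul_apply, smul_eq_mul]
      rw [← hM1, ← hM1, hinvt]; ring)
    (fun x hx => by rw [hB, hc x hx, smul_smul, inv_mul_cancel₀ hc0, one_smul])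
    (fun x => by
      rw [hB, hB, hB, Matrix.mulVec_smul, Matrix.mulVec_smul, Matrix.mulVec_smul, hA3, hdc,
        smul_smul, smul_smul, smul_smul]
      have : c⁻¹ * c⁻¹ * c⁻¹ * c ^ 3 = 1 := by field_simp
      rw [this, one_smul])
  apply hns
  refine ⟨c, ?_⟩
  apply Matrix.ext_of_mulVec_single
  intro i
  have h := hcore (Pi.single i 1)
  rw [hB] at h
  rw [Matrix.smul_mulVec, Matrix.one_mulVec]
  conv_rhs => rw [← h, smul_smul, mul_inv_cancel₀ hc0, one_smul]
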